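/- arXiv:2601.16966 — 5 statements merged into one kernel-verified Lean document; each statement's English description precedes it below -/
import Mathlib

section
/- Let n ≥ 3 and 1 ≤ k ≤ n-2 be integers, write ℝ^n = ℝ^{n-k} × ℝ^k with coordinates (x,y), and set ρ(x,y) := √(|x|² + |y|²) and t(x,y) := |y|/ρ. Let α ∈ ℝ and let g : (0,1) → ℝ be twice continuously differentiable and satisfy the ODE (1-t²)·g''(t) + ((k-1)·t⁻¹ - (n-1)·t)·g'(t) + α(α+n-2)·g(t) = 0 for all t ∈ (0,1). Then the function U(x,y) := ρ(x,y)^α · g(t(x,y)) is harmonic (its Laplacian vanishes) on the open set {(x,y) ∈ ℝ^{n-k} × ℝ^k : x ≠ 0 and y ≠ 0}. -/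
/-!
Write `a = |x|²`, `b = |y|²`, `R = a + b` and `u = b / R = t²`. Then `U = R^(α/2) h(u)` with
`h(u) = g(√u)`, so along each coordinate line `U` is a function of one quadratic polynomial in the
parameter. For a function `φ` of `a = |x|²` alone, summing the second derivatives over the `m`
coordinate directions gives `4 a φ''(a) + 2 m φ'(a)` (`sum_iteratedDeriv_two_norm_sq`).

Differentiating `R^γ H(u)` produces an expression of the same shape with `γ` lowered by one:
`∂_a` replaces `H` by `γ H - u H'` and `∂_b` replaces it by `γ H + (1 - u) H'`
(`hasDerivAt_homogeneous_left`, `hasDerivAt_homogeneous_right`). Applying each rule twice, the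
Laplacian becomes `R^(α/2 - 1)` times a linear combination of `h`, `h'`, `h''`, and the substitution
`h' = g' / (2t)`, `h'' = g'' / (4t²) - g' / (4t³)` turns that combination into the left-hand side of
the ODE.
-/

/-- Chain rule for the second derivative along a coordinate line, where `|x + s e|²` equals
`|x|² + 2 s c + s²` with `c` the coordinate of `x` along `e`. -/
lemma iteratedDeriv_two_comp_quadratic (φ φ₁ : ℝ → ℝ) (φ₂ a c : ℝ)
    (h₁ : ∀ᶠ z in nhds a, HasDerivAt φ (φ₁ z) z) (h₂ : HasDerivAt φ₁ φ₂ a) :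
    iteratedDeriv 2 (fun s : ℝ => φ (a + 2 * s * c + s ^ 2)) 0
      = 4 * c ^ 2 * φ₂ + 2 * φ₁ a := by
  have hq : ∀ s : ℝ, HasDerivAt (fun s : ℝ => a + 2 * s * c + s ^ 2) (2 * c + 2 * s) s := by
    intro s
    have := ((((hasDerivAt_id s).const_mul 2).mul_const c).const_add a).add (hasDerivAt_pow 2 s)
    exact this.congr_deriv (by simp)
  have hq0 : a + 2 * 0 * c + 0 ^ 2 = a := by ring
  have ht : Filter.Tendsto (fun s : ℝ => a + 2 * s * c + s ^ 2) (nhds 0) (nhds a) := by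
    simpa using (hq 0).continuousAt.tendsto
  have hd : deriv (fun s : ℝ => φ (a + 2 * s * c + s ^ 2)) =ᶠ[nhds 0]
      fun s => φ₁ (a + 2 * s * c + s ^ 2) * (2 * c + 2 * s) := by
    filter_upwards [ht.eventually h₁] with s hs
    exact (HasDerivAt.comp s hs (hq s)).deriv
  rw [iteratedDeriv_succ, iteratedDeriv_one, hd.deriv_eq]
  have h3 : HasDerivAt (fun s : ℝ => φ₁ (a + 2 * s * c + s ^ 2)) (φ₂ * (2 * c + 2 * 0)) 0 :=
    HasDerivAt.comp (h₂ := φ₁) 0 (by rw [hq0]; exact h₂) (hq 0)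
  have h4 : HasDerivAt (fun s : ℝ => 2 * c + 2 * s) 2 0 := by
    simpa using ((hasDerivAt_id (0 : ℝ)).const_mul 2).const_add (2 * c)
  refine (h3.mul h4).deriv.trans ?_
  rw [hq0]
  ring

/-- The Euclidean Laplacian of a function of `|x|²`. -/
lemma sum_iteratedDeriv_two_norm_sq {m : ℕ} (x : EuclideanSpace ℝ (Fin m))
    (φ φ₁ : ℝ → ℝ) (φ₂ : ℝ)
    (h₁ : ∀ᶠ z in nhds (‖x‖ ^ 2), HasDerivAt φ (φ₁ z) z) (h₂ : HasDerivAt φ₁ φ₂ (‖x‖ ^ 2)) :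
    ∑ i : Fin m, iteratedDeriv 2
        (fun s : ℝ => φ (‖x + s • EuclideanSpace.single i (1 : ℝ)‖ ^ 2)) 0
      = 4 * ‖x‖ ^ 2 * φ₂ + 2 * m * φ₁ (‖x‖ ^ 2) := by
  have hn : ∀ (i : Fin m) (s : ℝ), ‖x + s • EuclideanSpace.single i (1 : ℝ)‖ ^ 2
      = ‖x‖ ^ 2 + 2 * s * x i + s ^ 2 := by
    intro i s
    rw [norm_add_sq_real, inner_smul_right, EuclideanSpace.inner_single_right, norm_smul]
    simp
    ring
  simp_rw [hn, iteratedDeriv_two_comp_quadratic φ φ₁ φ₂ _ _ h₁ h₂]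
  rw [Finset.sum_add_distrib, ← Finset.sum_mul, ← Finset.mul_sum, ← EuclideanSpace.real_norm_sq_eq]
  simp
  ring

lemma hasDerivAt_homogeneous_left (γ a b H' : ℝ) (H : ℝ → ℝ) (hR : 0 < a + b)
    (hH : HasDerivAt H H' (b / (a + b))) :
    HasDerivAt (fun z => (z + b) ^ γ * H (b / (z + b)))
      ((a + b) ^ (γ - 1) * (γ * H (b / (a + b)) - b / (a + b) * H')) a := by
  have e : HasDerivAt (fun z : ℝ => z + b) 1 a := (hasDerivAt_id a).add_const b
  have h1 := e.rpow_const (p := γ) (Or.inl hR.ne')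
  have h2 := (hasDerivAt_const a b).div e hR.ne'
  have h3 := h1.mul (HasDerivAt.comp (h₂ := H) a hH h2)
  refine h3.congr_deriv ?_
  rw [Real.rpow_sub_one hR.ne']
  simp only [Function.comp, Pi.div_apply]
  field_simp
  ring

lemma hasDerivAt_homogeneous_right (γ a b H' : ℝ) (H : ℝ → ℝ) (hR : 0 < a + b)
    (hH : HasDerivAt H H' (b / (a + b))) :
    HasDerivAt (fun z => (a + z) ^ γ * H (z / (a + z)))
      ((a + b) ^ (γ - 1) * (γ * H (b / (a + b)) + (1 - b / (a + b)) * H')) b := by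
  have e : HasDerivAt (fun z : ℝ => a + z) 1 b := (hasDerivAt_id b).const_add a
  have h1 := e.rpow_const (p := γ) (Or.inl hR.ne')
  have h2 := (hasDerivAt_id b).div e hR.ne'
  have h3 := h1.mul (HasDerivAt.comp (h₂ := H) b hH h2)
  refine h3.congr_deriv ?_
  rw [Real.rpow_sub_one hR.ne']
  simp only [Function.comp, Pi.div_apply, id]
  field_simp


/-- An `O(n-k) × O(k)`-invariant function of the form
`U(x,y) = ρ^α · g(t)`, with `ρ = √(|x|²+|y|²)`, `t = |y|/ρ`, and `g` a `C²`
solution of the ODE `(1-t²)g'' + ((k-1)t⁻¹-(n-1)t)g' + α(α+n-2)g = 0` on `(0,1)`,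
is harmonic on the set where `x ≠ 0` and `y ≠ 0` (its Laplacian, the sum of the
second derivatives along the standard orthonormal directions, vanishes). -/
theorem homogeneous_invariant_harmonic
    (n k : ℕ) (hn : 3 ≤ n) (hk1 : 1 ≤ k) (hk2 : k ≤ n - 2)
    (α : ℝ) (g : ℝ → ℝ) (hg : ContDiffOn ℝ 2 g (Set.Ioo 0 1))
    (hode : ∀ t ∈ Set.Ioo (0 : ℝ) 1,
      (1 - t ^ 2) * deriv (deriv g) t
        + (((k : ℝ) - 1) * t⁻¹ - ((n : ℝ) - 1) * t) * deriv g t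
        + α * (α + (n : ℝ) - 2) * g t = 0)
    (U : EuclideanSpace ℝ (Fin (n - k)) × EuclideanSpace ℝ (Fin k) → ℝ)
    (hU : ∀ p : EuclideanSpace ℝ (Fin (n - k)) × EuclideanSpace ℝ (Fin k),
      U p = Real.sqrt (‖p.1‖ ^ 2 + ‖p.2‖ ^ 2) ^ α
        * g (‖p.2‖ / Real.sqrt (‖p.1‖ ^ 2 + ‖p.2‖ ^ 2))) :
    ∀ p : EuclideanSpace ℝ (Fin (n - k)) × EuclideanSpace ℝ (Fin k),
      p.1 ≠ 0 → p.2 ≠ 0 →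
      (∑ i : Fin (n - k),
          iteratedDeriv 2
            (fun s : ℝ => U (p.1 + s • EuclideanSpace.single i (1 : ℝ), p.2)) 0)
        + (∑ j : Fin k,
          iteratedDeriv 2
            (fun s : ℝ => U (p.1, p.2 + s • EuclideanSpace.single j (1 : ℝ))) 0) = 0 := by
  intro p hp1 hp2
  obtain ⟨x, y⟩ := p
  simp only at hp1 hp2 ⊢
  have ha : 0 < ‖x‖ ^ 2 := by positivity
  have hb : 0 < ‖y‖ ^ 2 := by positivity
  -- `h(u) = g(√u)` and its first derivative
  set h : ℝ → ℝ := fun u => g (√u) with hh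
  set h₁ : ℝ → ℝ := fun u => deriv g (√u) / (2 * √u) with hh₁
  have hs : ∀ u ∈ Set.Ioo (0 : ℝ) 1, √u ∈ Set.Ioo (0 : ℝ) 1 := fun u hu =>
    ⟨Real.sqrt_pos.2 hu.1, by simpa using Real.sqrt_lt_sqrt hu.1.le hu.2⟩
  have hgd : ∀ t ∈ Set.Ioo (0 : ℝ) 1, HasDerivAt g (deriv g t) t := fun t ht =>
    ((hg.differentiableOn (by norm_num)).differentiableAt (isOpen_Ioo.mem_nhds ht)).hasDerivAt
  have hgdd : ∀ t ∈ Set.Ioo (0 : ℝ) 1, HasDerivAt (deriv g) (deriv (deriv g) t) t := by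
    intro t ht
    have hc : ContDiffOn ℝ 1 (deriv g) (Set.Ioo 0 1) :=
      hg.deriv_of_isOpen isOpen_Ioo (by norm_num)
    exact ((hc.differentiableOn (by norm_num)).differentiableAt
      (isOpen_Ioo.mem_nhds ht)).hasDerivAt
  have hd1 : ∀ u ∈ Set.Ioo (0 : ℝ) 1, HasDerivAt h (h₁ u) u := by
    intro u hu
    refine (HasDerivAt.comp (h₂ := g) u (hgd _ (hs u hu))
      (Real.hasDerivAt_sqrt hu.1.ne')).congr_deriv ?_
    simp only [hh₁]
    ring
  have hd2 : ∀ u ∈ Set.Ioo (0 : ℝ) 1, HasDerivAt h₁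
      (deriv (deriv g) (√u) / (4 * √u ^ 2) - deriv g (√u) / (4 * √u ^ 3)) u := by
    intro u hu
    have hu0 := (hs u hu).1
    have hr := Real.hasDerivAt_sqrt hu.1.ne'
    refine ((HasDerivAt.comp (h₂ := deriv g) u (hgdd _ (hs u hu)) hr).div
      (hr.const_mul 2) (by positivity)).congr_deriv ?_
    simp only [Function.comp]
    field_simp
    ring
  have hmem : ∀ a b : ℝ, 0 < a → 0 < b → b / (a + b) ∈ Set.Ioo (0 : ℝ) 1 := fun a b ha hb =>
    ⟨by positivity, by rw [div_lt_one (by positivity)]; linarith⟩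
  have hU' : ∀ p, U p = (‖p.1‖ ^ 2 + ‖p.2‖ ^ 2) ^ (α / 2)
      * h (‖p.2‖ ^ 2 / (‖p.1‖ ^ 2 + ‖p.2‖ ^ 2)) := by
    intro p
    rw [hU p, Real.sqrt_eq_rpow, ← Real.rpow_mul (by positivity), ← Real.sqrt_eq_rpow]
    simp only [hh]
    rw [Real.sqrt_div (by positivity), Real.sqrt_sq (by positivity)]
    congr 2
    ring
  simp only [hU']
  generalize hA : ‖x‖ ^ 2 = a at *
  generalize hB : ‖y‖ ^ 2 = b at *
  have hu := hmem a b ha hb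
  have hR : 0 < a + b := by positivity
  have D2 := hd2 _ hu
  have L := sum_iteratedDeriv_two_norm_sq x
    (fun z => (z + b) ^ (α / 2) * h (b / (z + b)))
    (fun z => (z + b) ^ (α / 2 - 1) *
      (fun u => α / 2 * h u - u * h₁ u) (b / (z + b))) _
    (by
      rw [hA]
      filter_upwards [eventually_gt_nhds ha] with z hz
      exact hasDerivAt_homogeneous_left _ _ _ _ _ (by positivity) (hd1 _ (hmem z b hz hb)))
    (by
      rw [hA]
      exact hasDerivAt_homogeneous_left _ _ _ _ (fun u => α / 2 * h u - u * h₁ u) hR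
        (((hd1 _ hu).const_mul _).sub ((hasDerivAt_id _).mul D2)))
  have K := sum_iteratedDeriv_two_norm_sq y
    (fun z => (a + z) ^ (α / 2) * h (z / (a + z)))
    (fun z => (a + z) ^ (α / 2 - 1) *
      (fun u => α / 2 * h u + (1 - u) * h₁ u) (z / (a + z))) _
    (by
      rw [hB]
      filter_upwards [eventually_gt_nhds hb] with z hz
      exact hasDerivAt_homogeneous_right _ _ _ _ _ (by positivity) (hd1 _ (hmem a z ha hz)))
    (by
      rw [hB]
      exact hasDerivAt_homogeneous_right _ _ _ _ (fun u => α / 2 * h u + (1 - u) * h₁ u) hR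
        (((hd1 _ hu).const_mul _).add (((hasDerivAt_id _).const_sub 1).mul D2)))
  rw [L, K, hA, hB, Nat.cast_sub (by omega)]
  have O := hode _ (hs _ hu)
  have ht0 := (hs _ hu).1
  have htu : b / (a + b) = √(b / (a + b)) ^ 2 := (Real.sq_sqrt hu.1.le).symm
  simp only [hh, hh₁]
  generalize √(b / (a + b)) = t at *
  -- with `R = a + b`, the squared norms are `b = R t²` and `a = R (1 - t²)`
  have hbR : b = (a + b) * t ^ 2 := by rw [← htu]; field_simp
  have haR : a = (a + b) * (1 - t ^ 2) := by linarith
  rw [Real.rpow_sub_one hR.ne' (α / 2 - 1)]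
  generalize (a + b) ^ (α / 2 - 1) = W at *
  generalize hRR : a + b = R at *
  generalize deriv (deriv g) t = g2 at *
  generalize deriv g t = g1 at *
  generalize g t = g0 at *
  rw [htu, haR, hbR]
  field_simp at O ⊢
  linear_combination (4 * W) * O
end

section
/- Let n ≥ 3 and k ≥ 1 be integers and let f_{n,k}(t) := ₂F₁((n-1)/2, -1/2; k/2; t²). Then for every t ∈ (0,1) one has the bound f_{n,k}(t) ≤ 1 - ((n-1)/(2k))·t² - ((n²-1)/(8k(k+2)))·t⁴ - ((n²-1)(n+3)/(16k(k+2)(k+4)))·t⁶. -/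
/-!
Every Taylor coefficient of `₂F₁(a, -1/2; c; s)` with `a, c > 0` and index `m ≥ 1` is nonpositive,
because `(-1/2)_m` has the single negative factor `-1/2`. Hence at `s ≥ 0` the function is bounded
above by each of its Taylor polynomials, and the claim is the cubic one for `a = (n-1)/2`,
`c = k/2`, `s = t²`. Convergence of the series for `0 < s < 1`, without which the sum would be a
junk value, comes from the ratio test (`summable_hyp2F1`).
-/

/-- The Gauss hypergeometric function `₂F₁(a,b;c;s)`, defined by its power series. -/
noncomputable def hyp2F1 (a b c s : ℝ) : ℝ :=
  ∑' m : ℕ, ((ascPochhammer ℝ m).eval a * (ascPochhammer ℝ m).eval b)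
    / ((ascPochhammer ℝ m).eval c * (m.factorial : ℝ)) * s ^ m

/-- `f_{n,k}(t) := ₂F₁((n-1)/2, -1/2; k/2; t²)`. -/
noncomputable def fnk (n k : ℕ) (t : ℝ) : ℝ :=
  hyp2F1 (((n : ℝ) - 1) / 2) (-1 / 2) ((k : ℝ) / 2) (t ^ 2)

open Filter Topology

/-- The nonvanishing hypothesis on `b` says that the series does not terminate; it keeps the
consecutive ratios meaningful. -/
lemma summable_hyp2F1 {a b c s : ℝ} (ha : 0 < a) (hb : ∀ m : ℕ, (ascPochhammer ℝ m).eval b ≠ 0)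
    (hc : 0 < c) (hs0 : 0 < s) (hs1 : s < 1) :
    Summable fun m : ℕ => ((ascPochhammer ℝ m).eval a * (ascPochhammer ℝ m).eval b)
      / ((ascPochhammer ℝ m).eval c * (m.factorial : ℝ)) * s ^ m := by
  have hA (m : ℕ) : (ascPochhammer ℝ m).eval a ≠ 0 := (ascPochhammer_pos m a ha).ne'
  have hC (m : ℕ) : (ascPochhammer ℝ m).eval c ≠ 0 := (ascPochhammer_pos m c hc).ne'
  refine summable_of_ratio_test_tendsto_lt_one hs1 (Eventually.of_forall fun m => ?_) ?_
  · exact mul_ne_zero (div_ne_zero (mul_ne_zero (hA m) (hb m))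
      (mul_ne_zero (hC m) (by positivity))) (by positivity)
  · have h1 : Tendsto (fun m : ℕ => (a + 1 * (m : ℝ)) / (c + 1 * (m : ℝ))) atTop (𝓝 (1 / 1)) :=
      tendsto_add_mul_div_add_mul_atTop_nhds a c 1 one_ne_zero
    have h2 : Tendsto (fun m : ℕ => (b + 1 * (m : ℝ)) / (1 + 1 * (m : ℝ))) atTop (𝓝 (1 / 1)) :=
      tendsto_add_mul_div_add_mul_atTop_nhds b 1 1 one_ne_zero
    have h3 := ((h1.mul h2).mul_const s).norm
    have h4 : ‖(1 / 1 * (1 / 1) * s : ℝ)‖ = s := by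
      simp [abs_of_pos hs0]
    rw [h4] at h3
    refine h3.congr fun m => ?_
    rw [← norm_div]
    congr 1
    have := hA m
    have := hb m
    have := hC m
    have hcm : c + m ≠ 0 := by positivity
    have hm1 : (1 : ℝ) + m ≠ 0 := by positivity
    have hm2 : (m : ℝ) + 1 ≠ 0 := by positivity
    have hf : (m.factorial : ℝ) ≠ 0 := by positivity
    simp only [ascPochhammer_succ_eval, Nat.factorial_succ, Nat.cast_mul, Nat.cast_add,
      Nat.cast_one, pow_succ, one_mul]
    field_simp
    ring

/-- The factor of index `0` is `-1/2` and all later factors are positive. -/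
lemma ascPochhammer_neg_half_succ_neg (m : ℕ) :
    (ascPochhammer ℝ (m + 1)).eval (-1 / 2 : ℝ) < 0 := by
  induction m with
  | zero => simp; norm_num
  | succ m ih =>
    rw [ascPochhammer_succ_eval]
    refine mul_neg_of_neg_of_pos ih ?_
    push_cast
    linarith [(Nat.cast_nonneg m : (0 : ℝ) ≤ m)]

/-- For integers `n ≥ 3`, `k ≥ 1` and every `t ∈ (0,1)`,
`f_{n,k}(t) ≤ 1 - ((n-1)/(2k))t² - ((n²-1)/(8k(k+2)))t⁴
  - ((n²-1)(n+3)/(16k(k+2)(k+4)))t⁶`. -/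
theorem fnk_cubic_bound (n k : ℕ) (hn : 3 ≤ n) (hk : 1 ≤ k) :
    ∀ t ∈ Set.Ioo (0 : ℝ) 1,
      fnk n k t ≤ 1 - (((n : ℝ) - 1) / (2 * (k : ℝ))) * t ^ 2
        - (((n : ℝ) ^ 2 - 1) / (8 * (k : ℝ) * ((k : ℝ) + 2))) * t ^ 4
        - (((n : ℝ) ^ 2 - 1) * ((n : ℝ) + 3)
            / (16 * (k : ℝ) * ((k : ℝ) + 2) * ((k : ℝ) + 4))) * t ^ 6 := by
  rintro t ⟨ht0, ht1⟩
  have hn' : (3 : ℝ) ≤ n := by exact_mod_cast hn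
  have hk' : (1 : ℝ) ≤ k := by exact_mod_cast hk
  have ha : 0 < ((n : ℝ) - 1) / 2 := by linarith
  have hc : 0 < (k : ℝ) / 2 := by linarith
  have hb (m : ℕ) : (ascPochhammer ℝ m).eval (-1 / 2 : ℝ) ≠ 0 := by
    cases m with
    | zero => simp
    | succ m => exact (ascPochhammer_neg_half_succ_neg m).ne
  have hsum := summable_hyp2F1 ha hb hc (by positivity : 0 < t ^ 2) (by nlinarith)
  -- Negating the series makes all terms of index `m ≥ 4` nonnegative.
  have key := hsum.neg.sum_le_tsum (Finset.range 4) fun m hm => by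
    obtain ⟨j, rfl⟩ : ∃ j, m = j + 1 := Nat.exists_eq_succ_of_ne_zero (by rintro rfl; simp at hm)
    have hA := ascPochhammer_pos (j + 1) _ ha
    have hC := ascPochhammer_pos (j + 1) _ hc
    refine neg_nonneg.2 (mul_nonpos_of_nonpos_of_nonneg (div_nonpos_of_nonpos_of_nonneg ?_ ?_) ?_)
    · exact (mul_neg_of_pos_of_neg hA (ascPochhammer_neg_half_succ_neg j)).le
    · positivity
    · positivity
  rw [tsum_neg, Finset.sum_neg_distrib] at key
  refine (neg_le_neg_iff.1 key).trans (le_of_eq ?_)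
  simp only [Finset.sum_range_succ, Finset.sum_range_zero, ascPochhammer_succ_eval,
    ascPochhammer_zero, Polynomial.eval_one, Nat.factorial]
  push_cast
  have h0 : (k : ℝ) ≠ 0 := by positivity
  have h2 : (k : ℝ) + 2 ≠ 0 := by positivity
  have h4 : (k : ℝ) + 4 ≠ 0 := by positivity
  -- Stated so that `field_simp` recognises the Pochhammer factors of `k / 2` as nonzero.
  have e2 : (k : ℝ) / 2 + 1 = (k + 2) / 2 := by ring
  have e4 : (k : ℝ) / 2 + 2 = (k + 4) / 2 := by ring
  norm_num only [e2, e4, add_zero, zero_add, one_mul]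
  field_simp
  ring
end

section
/- Let n ≥ 3 and 1 ≤ k ≤ n-2 be integers. The function f_{n,k}(t) := ₂F₁((n-1)/2, -1/2; k/2; t²) satisfies f_{n,k}(0) = 1, is strictly decreasing on [0,1), and possesses a unique zero t_{n,k} in the open interval (0,1); in particular f_{n,k} > 0 on [0, t_{n,k}) and f_{n,k} < 0 on (t_{n,k}, 1). -/
open Filter Topology

/-- The `m`-th Taylor coefficient of `₂F₁(a, -1/2; c; ·)`, written as in `hyp2F1`. -/
noncomputable def hypCoeff (a c : ℝ) (m : ℕ) : ℝ :=
  ((ascPochhammer ℝ m).eval a * (ascPochhammer ℝ m).eval (-1 / 2))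
    / ((ascPochhammer ℝ m).eval c * (m.factorial : ℝ))

lemma hyp2F1_eq_tsum (a c s : ℝ) :
    hyp2F1 a (-1 / 2) c s = ∑' m : ℕ, hypCoeff a c m * s ^ m := rfl

lemma hypCoeff_zero (a c : ℝ) : hypCoeff a c 0 = 1 := by simp [hypCoeff]

lemma hypCoeff_succ {a c : ℝ} (hc : 0 < c) (m : ℕ) :
    hypCoeff a c (m + 1) = hypCoeff a c m * ((a + m) * (m - 1 / 2) / ((c + m) * (m + 1))) := by
  have h1 := ascPochhammer_pos m c hc
  have h2 : (0 : ℝ) < m.factorial := by exact_mod_cast m.factorial_pos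
  have h3 : 0 < c + m := by positivity
  simp only [hypCoeff, ascPochhammer_succ_eval, Nat.factorial_succ]
  push_cast
  field_simp
  ring

lemma hypCoeff_succ_neg {a c : ℝ} (ha : 0 < a) (hc : 0 < c) (m : ℕ) :
    hypCoeff a c (m + 1) < 0 := by
  induction m with
  | zero =>
    rw [hypCoeff_succ hc, hypCoeff_zero]
    have : 0 < a / (2 * c) := by positivity
    have h : 1 * ((a + (0 : ℕ)) * (((0 : ℕ) : ℝ) - 1 / 2) / ((c + (0 : ℕ)) * (((0 : ℕ) : ℝ) + 1)))
        = -(a / (2 * c)) := by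
      push_cast
      field_simp
      ring
    rw [h]
    linarith
  | succ m ih =>
    rw [hypCoeff_succ hc]
    refine mul_neg_of_neg_of_pos ih ?_
    have : (0 : ℝ) < ((m + 1 : ℕ) : ℝ) - 1 / 2 := by
      push_cast
      linarith [(Nat.cast_nonneg m : (0 : ℝ) ≤ m)]
    positivity

/-- The radius of convergence is `1` because none of the three parameters is a nonpositive integer. -/
lemma hypSeries_radius {a c : ℝ} (ha : 0 < a) (hc : 0 < c) :
    (ordinaryHypergeometricSeries ℝ a (-1 / 2) c).radius = 1 := by
  refine ordinaryHypergeometricSeries_radius_eq_one ℝ a (-1 / 2) c fun j => ?_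
  have hj : (0 : ℝ) ≤ j := Nat.cast_nonneg j
  refine ⟨by linarith, fun h => ?_, by linarith⟩
  have h2 : (2 * j : ℝ) = 1 := by linarith
  have h3 : 2 * j = 1 := by exact_mod_cast h2
  omega

lemma hypSeries_apply (a c s : ℝ) (m : ℕ) :
    (ordinaryHypergeometricSeries ℝ a (-1 / 2) c m fun _ => s) = hypCoeff a c m * s ^ m := by
  rw [ordinaryHypergeometricSeries_apply_eq, hypCoeff, smul_eq_mul]
  field_simp

lemma mem_eball_one {s : ℝ} (hs : s ∈ Set.Ico (0 : ℝ) 1) : s ∈ Metric.eball (0 : ℝ) 1 := by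
  rw [← ENNReal.ofReal_one, Metric.eball_ofReal]
  simpa [abs_of_nonneg hs.1] using hs.2

lemma summable_hypCoeff {a c s : ℝ} (ha : 0 < a) (hc : 0 < c) (hs : s ∈ Set.Ico (0 : ℝ) 1) :
    Summable fun m => hypCoeff a c m * s ^ m := by
  have := (ordinaryHypergeometricSeries ℝ a (-1 / 2) c).summable (x := s)
    (by rw [hypSeries_radius ha hc]; exact mem_eball_one hs)
  simpa only [hypSeries_apply] using this

lemma hyp2F1_continuousOn {a c : ℝ} (ha : 0 < a) (hc : 0 < c) :
    ContinuousOn (hyp2F1 a (-1 / 2) c) (Set.Ico 0 1) := by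
  have hr := hypSeries_radius ha hc
  have h := ((ordinaryHypergeometricSeries ℝ a (-1 / 2) c).hasFPowerSeriesOnBall
    (by rw [hr]; exact one_pos)).continuousOn
  rw [hr] at h
  refine (h.mono fun s hs => mem_eball_one hs).congr fun s _ => ?_
  rw [hyp2F1_eq_tsum, FormalMultilinearSeries.sum]
  simp only [hypSeries_apply]

lemma hyp2F1_strictAntiOn {a c : ℝ} (ha : 0 < a) (hc : 0 < c) :
    StrictAntiOn (hyp2F1 a (-1 / 2) c) (Set.Ico 0 1) := by
  intro s hs t ht hst
  rw [hyp2F1_eq_tsum, hyp2F1_eq_tsum]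
  refine Summable.tsum_lt_tsum (i := 1) (fun m => ?_) ?_
    (summable_hypCoeff ha hc ht) (summable_hypCoeff ha hc hs)
  · cases m with
    | zero => simp
    | succ m =>
      exact mul_le_mul_of_nonpos_left (pow_le_pow_left₀ hs.1 hst.le _)
        (hypCoeff_succ_neg ha hc m).le
  · simpa using mul_lt_mul_of_neg_left hst (hypCoeff_succ_neg ha hc 0)

/-- With the shift `D = c / 2 + 1 / 2`, the sequence `(m - D) |u_m|` is nondecreasing once `m ≥ D`;
here `u_m` are the Taylor coefficients. The shift is needed: for `a = c + 1 / 2` the sequence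
`m |u_m|` is strictly decreasing. -/
lemma shifted_coeff_mono {a c : ℝ} (ha : 0 < a) (hc : 0 < c) (hac : c + 1 / 2 ≤ a) {m : ℕ}
    (hm : 1 ≤ m) (hD : c / 2 + 1 / 2 ≤ m) :
    (m - (c / 2 + 1 / 2)) * -hypCoeff a c m
      ≤ ((m + 1 : ℕ) - (c / 2 + 1 / 2)) * -hypCoeff a c (m + 1) := by
  have hm' : (1 : ℝ) ≤ m := by exact_mod_cast hm
  have hv : 0 < -hypCoeff a c m := by
    obtain ⟨j, rfl⟩ := Nat.exists_eq_add_of_le' hm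
    linarith [hypCoeff_succ_neg ha hc j]
  have hQ : 0 < (c + m) * ((m : ℝ) + 1) := by positivity
  have key : ((m : ℝ) - (c / 2 + 1 / 2)) * ((c + m) * (m + 1))
      ≤ (m + 1 - (c / 2 + 1 / 2)) * ((a + m) * (m - 1 / 2)) := by
    have h1 : 0 ≤ ((m : ℝ) + 1 - (c / 2 + 1 / 2)) * ((a - (c + 1 / 2)) * (m - 1 / 2)) := by
      refine mul_nonneg ?_ (mul_nonneg ?_ ?_) <;> linarith
    nlinarith [mul_pos hc hc]
  rw [hypCoeff_succ hc]
  push_cast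
  calc ((m : ℝ) - (c / 2 + 1 / 2)) * -hypCoeff a c m
      ≤ ((m + 1 - (c / 2 + 1 / 2)) * ((a + m) * (m - 1 / 2)) / ((c + m) * (m + 1)))
          * -hypCoeff a c m :=
        mul_le_mul_of_nonneg_right ((le_div_iff₀ hQ).2 key) hv.le
    _ = _ := by ring

/-- Divergence at `s = 1`, by comparison with the harmonic series. -/
lemma not_summable_hypCoeff {a c : ℝ} (ha : 0 < a) (hc : 0 < c) (hac : c + 1 / 2 ≤ a) :
    ¬ Summable fun m => -hypCoeff a c (m + 1) := by
  intro hsum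
  rw [summable_nat_add_iff (f := fun m => -hypCoeff a c m) 1] at hsum
  obtain ⟨M, hM⟩ := exists_nat_gt (c / 2 + 1 / 2)
  have hM1 : 1 ≤ M := by
    have : (0 : ℝ) < M := by linarith
    exact_mod_cast this
  -- Beyond `M` the shifted sequence is at least `w > 0`, which gives `|u_m| ≥ w / m`.
  set w : ℝ := (M - (c / 2 + 1 / 2)) * -hypCoeff a c M with hw
  have hwpos : 0 < w := by
    obtain ⟨j, rfl⟩ := Nat.exists_eq_add_of_le' hM1
    exact mul_pos (by linarith) (by linarith [hypCoeff_succ_neg ha hc j])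
  have hmono : ∀ m, M ≤ m → w ≤ (m - (c / 2 + 1 / 2)) * -hypCoeff a c m := by
    intro m hm
    induction m, hm using Nat.le_induction with
    | base => exact le_rfl
    | succ m hm ih =>
      have hm' : (M : ℝ) ≤ m := by exact_mod_cast hm
      exact ih.trans (shifted_coeff_mono ha hc hac (hM1.trans hm) (by linarith))
  have hharm : Summable fun m : ℕ => w * (1 / ((m + M : ℕ) : ℝ)) := by
    refine Summable.of_nonneg_of_le (fun m => by positivity) (fun m => ?_)
      ((summable_nat_add_iff M).2 hsum)
    have h := hmono (m + M) (by omega)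
    have hpos : (0 : ℝ) < ((m + M : ℕ) : ℝ) := by
      have : 0 < m + M := by omega
      exact_mod_cast this
    have hv : 0 < -hypCoeff a c (m + M) := by
      obtain ⟨j, hj⟩ := Nat.exists_eq_add_of_le' (show 1 ≤ m + M by omega)
      rw [hj]
      linarith [hypCoeff_succ_neg ha hc j]
    rw [mul_one_div, div_le_iff₀ hpos]
    nlinarith
  rw [summable_mul_left_iff hwpos.ne',
    summable_nat_add_iff (f := fun m : ℕ => 1 / (m : ℝ)) M] at hharm
  exact Real.not_summable_one_div_natCast hharm

lemma exists_hyp2F1_neg {a c : ℝ} (ha : 0 < a) (hc : 0 < c) (hac : c + 1 / 2 ≤ a) :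
    ∃ s ∈ Set.Ioo (0 : ℝ) 1, hyp2F1 a (-1 / 2) c s < 0 := by
  have hdiv := (not_summable_iff_tendsto_nat_atTop_of_nonneg
    (fun m => by linarith [hypCoeff_succ_neg ha hc m])).1 (not_summable_hypCoeff ha hc hac)
  obtain ⟨N, hN⟩ := (hdiv.eventually_gt_atTop 1).exists
  have hcont : Continuous fun s : ℝ =>
      ∑ m ∈ Finset.range N, -hypCoeff a c (m + 1) * s ^ (m + 1) := by fun_prop
  have hev : ∀ᶠ s in 𝓝[<] (1 : ℝ),
      1 < ∑ m ∈ Finset.range N, -hypCoeff a c (m + 1) * s ^ (m + 1) :=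
    (hcont.continuousAt.eventually_const_lt (by simpa using hN)).filter_mono nhdsWithin_le_nhds
  obtain ⟨s, hs1, hs⟩ := (hev.and (Ioo_mem_nhdsLT (zero_lt_one' ℝ))).exists
  refine ⟨s, hs, ?_⟩
  have hsum := summable_hypCoeff ha hc ⟨hs.1.le, hs.2⟩
  have hsum' : Summable fun m => -hypCoeff a c (m + 1) * s ^ (m + 1) := by
    simpa only [neg_mul] using ((summable_nat_add_iff 1).2 hsum).neg
  have hle := hsum'.sum_le_tsum (Finset.range N) fun m _ =>
    mul_nonneg (by linarith [hypCoeff_succ_neg ha hc m]) (pow_nonneg hs.1.le _)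
  simp only [neg_mul, tsum_neg] at hle hs1
  rw [hyp2F1_eq_tsum, hsum.tsum_eq_zero_add, hypCoeff_zero]
  linarith

/-- For `n ≥ 3` and `1 ≤ k ≤ n-2`, `f_{n,k}(0) = 1`, `f_{n,k}` is
strictly decreasing on `[0,1)`, and has a unique zero `t₀ ∈ (0,1)`; moreover
`f_{n,k} > 0` on `[0,t₀)` and `f_{n,k} < 0` on `(t₀,1)`. -/
theorem fnk_unique_zero (n k : ℕ) (hn : 3 ≤ n) (hk1 : 1 ≤ k) (hk2 : k ≤ n - 2) :
    fnk n k 0 = 1 ∧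
    StrictAntiOn (fnk n k) (Set.Ico 0 1) ∧
    ∃ t₀ ∈ Set.Ioo (0 : ℝ) 1,
      fnk n k t₀ = 0 ∧
      (∀ t ∈ Set.Ioo (0 : ℝ) 1, fnk n k t = 0 → t = t₀) ∧
      (∀ t ∈ Set.Ico (0 : ℝ) t₀, 0 < fnk n k t) ∧
      (∀ t ∈ Set.Ioo t₀ (1 : ℝ), fnk n k t < 0) := by
  have ha : (0 : ℝ) < ((n : ℝ) - 1) / 2 := by
    have : (3 : ℝ) ≤ n := by exact_mod_cast hn
    linarith
  have hc : (0 : ℝ) < (k : ℝ) / 2 := by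
    have : (1 : ℝ) ≤ k := by exact_mod_cast hk1
    linarith
  have hac : (k : ℝ) / 2 + 1 / 2 ≤ ((n : ℝ) - 1) / 2 := by
    have h : k + 2 ≤ n := by omega
    have : (k : ℝ) + 2 ≤ n := by exact_mod_cast h
    linarith
  have hmaps : Set.MapsTo (fun t : ℝ => t ^ 2) (Set.Ico 0 1) (Set.Ico 0 1) := fun t ht =>
    ⟨sq_nonneg t, pow_lt_one₀ ht.1 ht.2 two_ne_zero⟩
  have h0 : fnk n k 0 = 1 := by
    rw [fnk, hyp2F1_eq_tsum, tsum_eq_single 0 (fun m hm => by simp [hm]), hypCoeff_zero]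
    simp
  have hanti : StrictAntiOn (fnk n k) (Set.Ico 0 1) := fun s hs t ht hst =>
    hyp2F1_strictAntiOn ha hc (hmaps hs) (hmaps ht) (pow_lt_pow_left₀ hst hs.1 two_ne_zero)
  have hcont : ContinuousOn (fnk n k) (Set.Ico 0 1) :=
    (hyp2F1_continuousOn ha hc).comp (continuous_pow 2).continuousOn hmaps
  obtain ⟨s, hs, hneg⟩ := exists_hyp2F1_neg ha hc hac
  have hr0 : 0 ≤ √s := Real.sqrt_nonneg s
  have hr1 : √s < 1 := by
    rw [Real.sqrt_lt' one_pos]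
    simpa using hs.2
  have hrneg : fnk n k (√s) < 0 := by rwa [fnk, Real.sq_sqrt hs.1.le]
  obtain ⟨t₀, ht₀, hz⟩ := intermediate_value_Icc' hr0
    (hcont.mono fun t ht => ⟨ht.1, ht.2.trans_lt hr1⟩)
    (show (0 : ℝ) ∈ Set.Icc (fnk n k (√s)) (fnk n k 0) from
      ⟨hrneg.le, by rw [h0]; exact zero_le_one⟩)
  have hne : t₀ ≠ 0 := by
    rintro rfl
    rw [h0] at hz
    exact one_ne_zero hz
  have ht₀I : t₀ ∈ Set.Ico (0 : ℝ) 1 := ⟨ht₀.1, ht₀.2.trans_lt hr1⟩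
  refine ⟨h0, hanti, t₀, ⟨lt_of_le_of_ne ht₀.1 hne.symm, ht₀I.2⟩, hz, fun t ht h => ?_,
    fun t ht => ?_, fun t ht => ?_⟩
  · exact hanti.injOn ⟨ht.1.le, ht.2⟩ ht₀I (h.trans hz.symm)
  · rw [← hz]
    exact hanti ⟨ht.1, ht.2.trans ht₀I.2⟩ ht₀I ht.2
  · rw [← hz]
    exact hanti ht₀I ⟨ht₀I.1.trans ht.1.le, ht.2⟩ ht.1
end

section
/- Let n ≥ 3 and 1 ≤ k ≤ n-2 be integers and let α ∈ (2-n, 0); write α̂ := α(α+n-2) and g := g_{n,k,α}, which is strictly positive on [0,1). Define L : (0,1) → ℝ by L(t²) := t(1-t²)·g'(t)/g(t) - (n-2)·t² + (k-1) for t ∈ (0,1). Then L satisfies the Riccati equation 2s(1-s)·L'(s) + L(s)² + (ns - k)·L(s) + P(s) = 0 for every s ∈ (0,1), where P(s) := (n-2k)·s + α̂·s(1-s) + (k-1); moreover L extends continuously to s = 0 with L(0) = k-1 and L'(0) = -(n-2) - α̂/k. -/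
/-- `g_{n,k,α}(t) := ₂F₁((n+α-2)/2, -α/2; k/2; t²)`. -/
noncomputable def gnk (n k : ℕ) (α t : ℝ) : ℝ :=
  hyp2F1 (((n : ℝ) + α - 2) / 2) (-α / 2) ((k : ℝ) / 2) (t ^ 2)

/-- The function `L`, defined via `L(t²) = t(1-t²)·g'(t)/g(t) - (n-2)t² + (k-1)`. -/
noncomputable def Lfun (n k : ℕ) (α s : ℝ) : ℝ :=
  Real.sqrt s * (1 - s) * deriv (gnk n k α) (Real.sqrt s) / gnk n k α (Real.sqrt s)
    - ((n : ℝ) - 2) * s + ((k : ℝ) - 1)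

open Filter Topology

/-! ### Power series on the unit interval -/

/-- The power series with coefficients `f` converges absolutely at every radius in `(0,1)`. -/
def PS (f : ℕ → ℝ) : Prop := ∀ r : ℝ, 0 < r → r < 1 → Summable fun m => |f m| * r ^ m

/-- Coefficients of the formal derivative. -/
def dcoef (f : ℕ → ℝ) (m : ℕ) : ℝ := ((m : ℝ) + 1) * f (m + 1)

/-- The sum of the power series with coefficients `f`. -/
noncomputable def psum (f : ℕ → ℝ) (x : ℝ) : ℝ := ∑' m, f m * x ^ m

lemma PS.dcoef {f : ℕ → ℝ} (hf : PS f) : PS (dcoef f) := by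
  intro r h0 h1
  -- An intermediate radius `R ∈ (r, 1)`: the factor `m + 1` is absorbed by `(R / r) ^ m`.
  obtain ⟨R, hrR, hR1⟩ := exists_between h1
  have hR0 : 0 < R := h0.trans hrR
  have hs := (summable_nat_add_iff 1).2 (hf R hR0 hR1)
  have hq0 : 0 ≤ r / R := by positivity
  have hq1 : r / R < 1 := (div_lt_one hR0).2 hrR
  have ht : Tendsto (fun m : ℕ => ((m : ℝ) * (r / R) ^ m + (r / R) ^ m) / R) atTop
      (𝓝 ((0 + 0) / R)) :=
    ((tendsto_self_mul_const_pow_of_lt_one hq0 hq1).add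
      (tendsto_pow_atTop_nhds_zero_of_lt_one hq0 hq1)).div_const R
  obtain ⟨C, hC⟩ := ht.bddAbove_range
  refine Summable.of_nonneg_of_le (fun m => by positivity) (fun m => ?_) (hs.mul_right C)
  have hm : ((m : ℝ) * (r / R) ^ m + (r / R) ^ m) / R ≤ C := hC ⟨m, rfl⟩
  have e : |_root_.dcoef f m| * r ^ m
      = |f (m + 1)| * R ^ (m + 1) * (((m : ℝ) * (r / R) ^ m + (r / R) ^ m) / R) := by
    rw [_root_.dcoef, abs_mul, abs_of_pos (by positivity : (0 : ℝ) < (m : ℝ) + 1), div_pow, pow_succ]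
    field_simp
  rw [e]
  exact mul_le_mul_of_nonneg_left hm (by positivity)

lemma PS.summable {f : ℕ → ℝ} (hf : PS f) {x : ℝ} (hx : |x| < 1) :
    Summable fun m => f m * x ^ m := by
  obtain ⟨R, hR, hR1⟩ := exists_between hx
  refine Summable.of_norm_bounded (hf R ((abs_nonneg x).trans_lt hR) hR1) (fun m => ?_)
  rw [Real.norm_eq_abs, abs_mul, abs_pow]
  gcongr

lemma PS.hasSum {f : ℕ → ℝ} (hf : PS f) {x : ℝ} (hx : |x| < 1) :
    HasSum (fun m => f m * x ^ m) (psum f x) := (hf.summable hx).hasSum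

lemma HasSum.of_termwise_eq {u v : ℕ → ℝ} {A : ℝ} (h : HasSum u A) (e : ∀ m, v m = u m) :
    HasSum v A := funext e ▸ h

/-- Multiplication by `x` of a formally differentiated series. -/
lemma hasSum_shift {d : ℕ → ℝ} {x A : ℝ}
    (h : HasSum (fun m : ℕ => ((m : ℝ) + 1) * d (m + 1) * x ^ m) A) :
    HasSum (fun m : ℕ => (m : ℝ) * d m * x ^ m) (x * A) := by
  rw [← hasSum_nat_add_iff' 1]
  simp only [Finset.sum_range_one, Nat.cast_zero, zero_mul, sub_zero]
  refine (h.mul_left x).of_termwise_eq fun m => ?_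
  push_cast
  ring

lemma PS.hasDerivAt {f : ℕ → ℝ} (hf : PS f) {x : ℝ} (hx : |x| < 1) :
    HasDerivAt (psum f) (psum (_root_.dcoef f) x) x := by
  obtain ⟨R, hR, hR1⟩ := exists_between hx
  have hR0 : 0 < R := (abs_nonneg x).trans_lt hR
  have hu : Summable fun m : ℕ => (m : ℝ) * |f m| * R ^ (m - 1) := by
    rw [← summable_nat_add_iff 1]
    refine (hf.dcoef R hR0 hR1).congr (fun m => ?_)
    rw [_root_.dcoef, abs_mul, abs_of_pos (by positivity : (0 : ℝ) < (m : ℝ) + 1)]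
    push_cast
    simp
  have key := hasDerivAt_tsum_of_isPreconnected (g := fun m y => f m * y ^ m)
    (g' := fun m y => f m * ((m : ℝ) * y ^ (m - 1))) (t := Metric.ball (0 : ℝ) R) (y₀ := 0) (y := x)
    hu Metric.isOpen_ball (convex_ball (0 : ℝ) R).isPreconnected
    (fun m y _ => (hasDerivAt_pow m y).const_mul (f m))
    (fun m y hy => ?_) (by simpa using hR0) (hf.summable (by simp)) (by simpa using hR)
  · refine key.congr_deriv ?_
    have hs : Summable fun m : ℕ => f m * ((m : ℝ) * x ^ (m - 1)) := by
      rw [← summable_nat_add_iff 1]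
      refine (hf.dcoef.summable hx).congr (fun m => ?_)
      simp only [_root_.dcoef, Nat.add_sub_cancel]
      push_cast
      ring
    rw [hs.tsum_eq_zero_add]
    simp only [Nat.cast_zero, zero_mul, mul_zero, zero_add, psum, _root_.dcoef, Nat.add_sub_cancel]
    refine tsum_congr (fun m => ?_)
    push_cast
    ring
  · have hy' : |y| ≤ R := by simpa using (Metric.mem_ball.1 hy).le
    rw [Real.norm_eq_abs, abs_mul, abs_mul, abs_pow, Nat.abs_cast]
    calc |f m| * ((m : ℝ) * |y| ^ (m - 1)) ≤ |f m| * ((m : ℝ) * R ^ (m - 1)) := by gcongr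
      _ = _ := by ring

/-! ### The Gauss hypergeometric equation -/

/-- Taylor coefficients of `₂F₁(a, b; c; ·)`. -/
noncomputable def hc (a b c : ℝ) (m : ℕ) : ℝ :=
  ((ascPochhammer ℝ m).eval a * (ascPochhammer ℝ m).eval b)
    / ((ascPochhammer ℝ m).eval c * (m.factorial : ℝ))

section Gauss

variable {a b c : ℝ}

lemma hc_pos (ha : 0 < a) (hb : 0 < b) (hc' : 0 < c) (m : ℕ) : 0 < hc a b c m := by
  have h1 := ascPochhammer_pos m a ha
  have h2 := ascPochhammer_pos m b hb
  have h3 := ascPochhammer_pos m c hc'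
  unfold hc
  positivity

lemma hc_succ (hc' : 0 < c) (m : ℕ) :
    ((m : ℝ) + 1) * (c + m) * hc a b c (m + 1) = (a + m) * (b + m) * hc a b c m := by
  have h3 := ascPochhammer_pos m c hc'
  have h4 : 0 < c + m := by positivity
  simp only [hc, ascPochhammer_succ_eval, Nat.factorial_succ]
  push_cast
  field_simp

lemma hc_PS (ha : 0 < a) (hb : 0 < b) (hc' : 0 < c) : PS (hc a b c) := by
  intro r h0 h1
  have hp := hc_pos ha hb hc'
  refine summable_of_ratio_test_tendsto_lt_one (l := r) h1
    (Eventually.of_forall fun m => (mul_pos (abs_pos.2 (hp m).ne') (pow_pos h0 m)).ne') ?_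
  have t1 := tendsto_add_mul_div_add_mul_atTop_nhds (𝕜 := ℝ) a 1 1 one_ne_zero
  have t2 := tendsto_add_mul_div_add_mul_atTop_nhds (𝕜 := ℝ) b c 1 one_ne_zero
  have t := (t1.mul t2).mul_const r
  simp only [div_one, one_mul] at t
  refine t.congr (fun m => ?_)
  have e : hc a b c (m + 1)
      = (a + m) * (b + m) / (((m : ℝ) + 1) * (c + m)) * hc a b c m := by
    have h4 : 0 < c + m := by positivity
    have := hc_succ (a := a) (b := b) hc' m
    field_simp
    linarith
  have hm := hp m
  have h4 : 0 < c + m := by positivity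
  rw [Real.norm_of_nonneg (by positivity), Real.norm_of_nonneg (by positivity),
    abs_of_pos (hp _), abs_of_pos hm, e, pow_succ]
  field_simp
  ring

lemma hyp_eq : hyp2F1 a b c = psum (hc a b c) := rfl

lemma hyp_ode (ha : 0 < a) (hb : 0 < b) (hc' : 0 < c) {s : ℝ} (hs : |s| < 1) :
    s * (1 - s) * psum (dcoef (dcoef (hc a b c))) s
      + (c - (a + b + 1) * s) * psum (dcoef (hc a b c)) s - a * b * psum (hc a b c) s = 0 := by
  have hf := hc_PS ha hb hc'
  have h0 := hf.hasSum hs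
  have h1 := hf.dcoef.hasSum hs
  have h2 := hf.dcoef.dcoef.hasSum hs
  have h1s := hasSum_shift (d := hc a b c) h1
  have h2s := hasSum_shift (d := dcoef (hc a b c)) h2
  -- `s F''` is itself of the form required for a second shift, with `d m = (m - 1) f m`.
  have h2ss := hasSum_shift (d := fun m => ((m : ℝ) - 1) * hc a b c m) (x := s)
    (A := s * psum (dcoef (dcoef (hc a b c))) s) (by
      refine h2s.of_termwise_eq fun m => ?_
      simp only [dcoef]
      push_cast
      ring)
  have tot := (((h2s.sub h2ss).add (h1.mul_left c)).sub (h1s.mul_left (a + b + 1))).sub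
    (h0.mul_left (a * b))
  have := HasSum.unique (a₂ := 0) tot (by
    refine hasSum_zero.of_termwise_eq fun m => ?_
    simp only [dcoef]
    linear_combination s ^ m * hc_succ (a := a) (b := b) hc' m)
  linear_combination this

lemma psum_zero (f : ℕ → ℝ) : psum f 0 = f 0 := by
  rw [psum, tsum_eq_single 0 (fun m hm => by simp [hm])]
  simp

lemma psum_pos (ha : 0 < a) (hb : 0 < b) (hc' : 0 < c) {s : ℝ} (h0 : 0 ≤ s) (h1 : s < 1) :
    0 < psum (hc a b c) s := by
  have hp := hc_pos ha hb hc'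
  refine ((hc_PS ha hb hc').summable (by rwa [abs_of_nonneg h0])).tsum_pos
    (fun m => mul_nonneg (hp m).le (pow_nonneg h0 m)) 0 ?_
  simpa using hp 0

end Gauss

/-! ### The Riccati equation -/

lemma Lfun_eq (n k : ℕ) (α : ℝ) {a b c : ℝ} (ha : 0 < a) (hb : 0 < b) (hc' : 0 < c)
    (ea : a = ((n : ℝ) + α - 2) / 2) (eb : b = -α / 2) (ec : c = (k : ℝ) / 2)
    {s : ℝ} (h0 : 0 ≤ s) (h1 : s < 1) :
    Lfun n k α s = 2 * s * (1 - s) * psum (dcoef (hc a b c)) s / psum (hc a b c) s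
      - ((n : ℝ) - 2) * s + ((k : ℝ) - 1) := by
  have hg : gnk n k α = fun t => psum (hc a b c) (t ^ 2) := by
    ext t
    rw [gnk, hyp_eq, ea, eb, ec]
  have hsq : Real.sqrt s ^ 2 = s := Real.sq_sqrt h0
  have hd : HasDerivAt (gnk n k α)
      (psum (dcoef (hc a b c)) s * (2 * Real.sqrt s)) (Real.sqrt s) := by
    have h := (hc_PS ha hb hc').hasDerivAt (x := Real.sqrt s ^ 2)
      (by rw [hsq, abs_of_nonneg h0]; exact h1)
    have h' := HasDerivAt.comp (h := fun t : ℝ => t ^ 2) (Real.sqrt s) h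
      (hasDerivAt_pow 2 (Real.sqrt s))
    rw [hsq] at h'
    rw [hg]
    exact h'.congr_deriv (by norm_num)
  rw [Lfun, hd.deriv, hg]
  simp only [hsq]
  congr 3
  linear_combination 2 * (1 - s) * psum (dcoef (hc a b c)) s * hsq

/-- For `n ≥ 3`, `1 ≤ k ≤ n-2`, `α ∈ (2-n,0)` and `α̂ = α(α+n-2)`,
the function `L(t²) = t(1-t²)g'/g - (n-2)t² + (k-1)` satisfies the Riccati equation
`2s(1-s)L' + L² + (ns-k)L + P(s) = 0` on `(0,1)`, with
`P(s) = (n-2k)s + α̂·s(1-s) + (k-1)`; moreover `L` extends continuously to `s = 0`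
with `L(0) = k-1` and `L'(0) = -(n-2) - α̂/k`. -/
theorem Lfun_riccati (n k : ℕ) (hn : 3 ≤ n) (hk1 : 1 ≤ k) (hk2 : k ≤ n - 2)
    (α : ℝ) (hα : α ∈ Set.Ioo (2 - (n : ℝ)) 0) :
    (∀ s ∈ Set.Ioo (0 : ℝ) 1,
      2 * s * (1 - s) * deriv (Lfun n k α) s + (Lfun n k α s) ^ 2
        + ((n : ℝ) * s - (k : ℝ)) * Lfun n k α s
        + (((n : ℝ) - 2 * (k : ℝ)) * s + (α * (α + (n : ℝ) - 2)) * s * (1 - s)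
            + ((k : ℝ) - 1)) = 0) ∧
    Lfun n k α 0 = (k : ℝ) - 1 ∧
    HasDerivWithinAt (Lfun n k α)
      (-((n : ℝ) - 2) - (α * (α + (n : ℝ) - 2)) / (k : ℝ)) (Set.Ici 0) 0 := by
  obtain ⟨hα1, hα2⟩ := hα
  have hk : (0 : ℝ) < k := by exact_mod_cast hk1
  obtain ⟨a, ea⟩ : ∃ a, a = ((n : ℝ) + α - 2) / 2 := ⟨_, rfl⟩
  obtain ⟨b, eb⟩ : ∃ b, b = -α / 2 := ⟨_, rfl⟩
  obtain ⟨c, ec⟩ : ∃ c, c = (k : ℝ) / 2 := ⟨_, rfl⟩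
  have ha : 0 < a := by linarith
  have hb : 0 < b := by linarith
  have hc' : 0 < c := by linarith
  have hL := fun {s : ℝ} => Lfun_eq n k α ha hb hc' ea eb ec (s := s)
  have hf := hc_PS ha hb hc'
  have hder : ∀ s : ℝ, 0 ≤ s → s < 1 → HasDerivAt
      (fun s => 2 * s * (1 - s) * psum (dcoef (hc a b c)) s / psum (hc a b c) s
        - ((n : ℝ) - 2) * s + ((k : ℝ) - 1))
      ((((2 * (1 - s) + 2 * s * (-1)) * psum (dcoef (hc a b c)) s
          + 2 * s * (1 - s) * psum (dcoef (dcoef (hc a b c))) s) * psum (hc a b c) s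
        - 2 * s * (1 - s) * psum (dcoef (hc a b c)) s * psum (dcoef (hc a b c)) s)
          / psum (hc a b c) s ^ 2 - ((n : ℝ) - 2)) s := by
    intro s h0 h1
    have hs : |s| < 1 := by rwa [abs_of_nonneg h0]
    have d1 : HasDerivAt (fun s : ℝ => 2 * s) 2 s := by
      simpa using (hasDerivAt_id s).const_mul (2 : ℝ)
    have d2 : HasDerivAt (fun s : ℝ => 1 - s) (-1) s := by
      simpa using (hasDerivAt_id s).const_sub (1 : ℝ)
    have d3 : HasDerivAt (fun s : ℝ => ((n : ℝ) - 2) * s) ((n : ℝ) - 2) s := by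
      simpa using (hasDerivAt_id s).const_mul ((n : ℝ) - 2)
    exact (((((d1.mul d2).mul (hf.dcoef.hasDerivAt hs)).div (hf.hasDerivAt hs)
      (psum_pos ha hb hc' h0 h1).ne').sub d3).add_const _)
  refine ⟨fun s hs => ?_, ?_, ?_⟩
  · obtain ⟨h0, h1⟩ := hs
    have hev : Lfun n k α =ᶠ[𝓝 s] fun s =>
        2 * s * (1 - s) * psum (dcoef (hc a b c)) s / psum (hc a b c) s
          - ((n : ℝ) - 2) * s + ((k : ℝ) - 1) := by
      filter_upwards [isOpen_Ioo.mem_nhds (⟨h0, h1⟩ : s ∈ Set.Ioo (0 : ℝ) 1)] with x hx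
      exact hL hx.1.le hx.2
    rw [hev.deriv_eq, (hder s h0.le h1).deriv, hL h0.le h1]
    have hode := hyp_ode ha hb hc' (s := s) (by rwa [abs_of_pos h0])
    have hF := (psum_pos ha hb hc' h0.le h1).ne'
    generalize psum (hc a b c) s = F at *
    generalize psum (dcoef (hc a b c)) s = F1 at *
    generalize psum (dcoef (dcoef (hc a b c))) s = F2 at *
    subst ea eb ec
    field_simp
    linear_combination 4 * s * (1 - s) * F * hode
  · rw [hL le_rfl one_pos]
    ring
  · have h := (hder 0 le_rfl one_pos).hasDerivWithinAt (s := Set.Ici 0)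
    have c0 : hc a b c 0 = 1 := by simp [hc]
    have c1 : hc a b c 1 = a * b / c := by simp [hc]
    have hv : (((2 * (1 - (0 : ℝ)) + 2 * 0 * (-1)) * psum (dcoef (hc a b c)) 0
          + 2 * 0 * (1 - 0) * psum (dcoef (dcoef (hc a b c))) 0) * psum (hc a b c) 0
        - 2 * 0 * (1 - 0) * psum (dcoef (hc a b c)) 0 * psum (dcoef (hc a b c)) 0)
          / psum (hc a b c) 0 ^ 2 - ((n : ℝ) - 2)
        = -((n : ℝ) - 2) - (α * (α + (n : ℝ) - 2)) / (k : ℝ) := by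
      simp only [psum_zero, dcoef, zero_add, c0, c1, Nat.cast_zero]
      subst ea eb ec
      field_simp
      ring
    rw [hv] at h
    refine h.congr_of_eventuallyEq ?_ (hL le_rfl one_pos)
    filter_upwards [self_mem_nhdsWithin,
      mem_nhdsWithin_of_mem_nhds (Iio_mem_nhds (one_pos : (0 : ℝ) < 1))] with x hx0 hx1
    exact hL hx0 hx1
end

section
/- Let n ≥ 3 and k ≥ 1 be real numbers with k ≤ n-2, and let α̂₁ < α̂₂ be real numbers in the interval (-((n-2)/2)², 0). Suppose v₁, v₂ : [0,1) → ℝ are continuous on [0,1), differentiable on (0,1), satisfy v_i(0) = -α̂_i/(2k), and solve v_i'(s) + v_i(s)² + ((k - n·s)/(2s(1-s)))·v_i(s) + α̂_i/(4s(1-s)) = 0 for all s ∈ (0,1), for i = 1, 2. Then v₂(s) < v₁(s) for every s ∈ (0,1). -/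
/-!
The difference `w = v1 - v2` is positive at `0`, and subtracting the two equations shows that
`w' = (a2 - a1) / (4s(1-s)) > 0` at any zero `s ∈ (0,1)` of `w`. At a first zero, however, `w` would
come down from positive values, so its derivative could not be positive. The singularity of the
equation at `s = 0` plays no role beyond the value `w 0 > 0`.
-/

/-- Strict monotonicity in the parameter `α̂` of solutions of the
singular Riccati ODE `v' + v² + ((k-ns)/(2s(1-s)))v + α̂/(4s(1-s)) = 0` on `(0,1)`
with initial value `v(0) = -α̂/(2k)`: if `α̂₁ < α̂₂` in `(-((n-2)/2)², 0)`, then the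
corresponding solutions satisfy `v₂ < v₁` on `(0,1)`. -/
theorem riccati_monotone_in_parameter
    (n k : ℝ) (hn : 3 ≤ n) (hk1 : 1 ≤ k) (hk2 : k ≤ n - 2)
    (a1 a2 : ℝ) (h12 : a1 < a2)
    (ha1 : a1 ∈ Set.Ioo (-(((n - 2) / 2) ^ 2)) 0)
    (ha2 : a2 ∈ Set.Ioo (-(((n - 2) / 2) ^ 2)) 0)
    (v1 v2 : ℝ → ℝ)
    (hc1 : ContinuousOn v1 (Set.Ico 0 1)) (hc2 : ContinuousOn v2 (Set.Ico 0 1))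
    (hd1 : ∀ s ∈ Set.Ioo (0 : ℝ) 1, DifferentiableAt ℝ v1 s)
    (hd2 : ∀ s ∈ Set.Ioo (0 : ℝ) 1, DifferentiableAt ℝ v2 s)
    (hv10 : v1 0 = -a1 / (2 * k)) (hv20 : v2 0 = -a2 / (2 * k))
    (hode1 : ∀ s ∈ Set.Ioo (0 : ℝ) 1,
      deriv v1 s + (v1 s) ^ 2 + ((k - n * s) / (2 * s * (1 - s))) * v1 s
        + a1 / (4 * s * (1 - s)) = 0)
    (hode2 : ∀ s ∈ Set.Ioo (0 : ℝ) 1,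
      deriv v2 s + (v2 s) ^ 2 + ((k - n * s) / (2 * s * (1 - s))) * v2 s
        + a2 / (4 * s * (1 - s)) = 0) :
    ∀ s ∈ Set.Ioo (0 : ℝ) 1, v2 s < v1 s := by
  intro s hs
  by_contra! hcon
  have hw0 : 0 < v1 0 - v2 0 := by
    rw [hv10, hv20, ← sub_div]
    apply div_pos <;> linarith
  have hcw : ContinuousOn (fun x => v1 x - v2 x) (Set.Icc 0 s) :=
    (hc1.sub hc2).mono (Set.Icc_subset_Ico_right hs.2)
  have hcomp : IsCompact (Set.Icc 0 s ∩ (fun x => v1 x - v2 x) ⁻¹' Set.Iic 0) :=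
    isCompact_Icc.of_isClosed_subset
      (hcw.preimage_isClosed_of_isClosed isClosed_Icc isClosed_Iic) Set.inter_subset_left
  obtain ⟨t, ⟨⟨ht0, hts⟩, htw⟩, htmin⟩ := hcomp.exists_isLeast
    ⟨s, ⟨hs.1.le, le_rfl⟩, by simpa using hcon⟩
  replace htw : v1 t - v2 t ≤ 0 := htw
  have htpos : 0 < t := by
    rcases ht0.eq_or_lt with h | h
    · rw [← h] at htw
      linarith
    · exact h
  have ht1 : t < 1 := hts.trans_lt hs.2
  have hleft : ∀ᶠ x in nhdsWithin t (Set.Iio t), 0 < v1 x - v2 x := by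
    filter_upwards [Ioo_mem_nhdsLT htpos] with x hx
    by_contra! hle
    exact absurd (htmin ⟨⟨hx.1.le, hx.2.le.trans hts⟩, hle⟩) (not_le.mpr hx.2)
  have hder : HasDerivAt (fun x => v1 x - v2 x) (deriv v1 t - deriv v2 t) t :=
    (hd1 t ⟨htpos, ht1⟩).hasDerivAt.sub (hd2 t ⟨htpos, ht1⟩).hasDerivAt
  have hzero : v1 t - v2 t = 0 :=
    le_antisymm htw (ge_of_tendsto (hder.continuousAt.tendsto.mono_left nhdsWithin_le_nhds)
      (hleft.mono fun _ h => h.le))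
  have hdpos : 0 < deriv v1 t - deriv v2 t := by
    have h1 := hode1 t ⟨htpos, ht1⟩
    have h2 := hode2 t ⟨htpos, ht1⟩
    rw [show v1 t = v2 t by linarith] at h1
    have h3 : a1 / (4 * t * (1 - t)) < a2 / (4 * t * (1 - t)) :=
      div_lt_div_of_pos_right h12 (mul_pos (by linarith) (by linarith))
    linarith
  have hslope : ∀ᶠ x in nhdsWithin t (Set.Iio t), 0 < slope (fun x => v1 x - v2 x) t x :=
    ((hasDerivAt_iff_tendsto_slope.mp hder).eventually_const_lt hdpos).filter_mono
      (nhdsWithin_mono t fun x hx => ne_of_lt hx)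
  obtain ⟨x, hx1, hx2, hx3⟩ := (hslope.and (hleft.and self_mem_nhdsWithin)).exists
  rw [slope_def_field, hzero, sub_zero] at hx1
  exact absurd hx1 (not_lt.mpr (div_nonpos_of_nonneg_of_nonpos hx2.le (sub_nonpos.mpr (le_of_lt hx3))))
end
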